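/- arXiv:2012.12565 — 6 statements merged into one kernel-verified Lean document; each statement's English description precedes it below -/
import Mathlib

section
/- Let q ∈ ℂ be nonzero and not a root of unity, let A be a unital associative ℂ-algebra, and let E, F, K ∈ A with K invertible satisfy the quantum sl₂ relations. Let m ≥ 1 and suppose that for each n ∈ {1, …, m} there are nonzero complex numbers tₙ, sₙ such that Eⁿ·F − F·Eⁿ = E^{n−1}·(tₙ·K − sₙ·K⁻¹). Then there exists a non-trivial Laurent polynomial in K lying in the two-sided ideal of A generated by E^m; that is, there is a finitely supported function c : ℤ → ℂ, not identically zero, such that Σ_{j∈ℤ} c_j·K^j belongs to the two-sided ideal generated by E^m. -/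
/-!
Let `I` be the two-sided ideal generated by `E ^ m`. If `Eⁿ⁺¹ p(K) ∈ I` for a nonzero polynomial `p`,
put `a = q⁻²` and `p'(X) = p(aX)`, so that `p(K) F = F p'(K)`. Multiplying by `F p(K)` on the right,
`Eⁿ⁺¹ p(K) F p(K) = F Eⁿ⁺¹ p(K) p'(K) + Eⁿ (t K - s K⁻¹) p'(K) p(K)`,
where the left-hand side and the first summand on the right lie in `I`. Multiplying the second
summand by `K` gives `Eⁿ r(K) ∈ I` with `r = (t X² - s) p' p ≠ 0`. Descending from `E ^ m` with
`p = 1` to `E ^ 0` (`exists_pow_mul_aeval_mem`) yields a nonzero polynomial in `K` lying in `I`.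
-/

open Polynomial

/-- If `K` and `F` commute up to the scalar `a`, then moving `F` to the left past `p(K)` rescales
the variable of `p` by `a`. -/
lemma aeval_mul_eq_mul_aeval_comp {A : Type*} [Ring A] [Algebra ℂ A] (a : ℂ) (F K : A)
    (h : K * F = a • (F * K)) (p : ℂ[X]) :
    aeval K p * F = F * aeval K (p.comp (C a * X)) := by
  induction p using Polynomial.induction_on' with
  | add p r hp hr => simp [add_mul, mul_add, hp, hr]
  | monomial n b =>
    have hpow : K ^ n * F = a ^ n • (F * K ^ n) := by
      induction n with
      | zero => simp
      | succ n ih =>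
        rw [pow_succ, mul_assoc, h, mul_smul_comm, ← mul_assoc, ih, smul_mul_assoc, smul_smul,
          mul_assoc, pow_succ, mul_comm (a ^ n)]
    rw [← C_mul_X_pow_eq_monomial]
    simp only [mul_comp, C_comp, pow_comp, X_comp, map_mul, aeval_C, map_pow, aeval_X, mul_pow]
    simp only [← map_pow, ← Algebra.smul_def, smul_mul_assoc, mul_smul_comm, hpow]
    exact smul_comm _ _ _

/-- The descent on the exponent of `E`, with `k` the number of steps taken. -/
lemma exists_pow_mul_aeval_mem {A : Type*} [Ring A] [Algebra ℂ A] (a : ℂ) (ha : a ≠ 0)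
    (E F : A) (K : Aˣ) (h : (K : A) * F = a • (F * (K : A))) (m : ℕ) (t s : ℕ → ℂ)
    (ht : ∀ n, 1 ≤ n → n ≤ m → t n ≠ 0)
    (hcomm : ∀ n, 1 ≤ n → n ≤ m →
      E ^ n * F - F * E ^ n = E ^ (n - 1) * (t n • (K : A) - s n • ((K⁻¹ : Aˣ) : A)))
    (k : ℕ) (hk : k ≤ m) :
    ∃ p : ℂ[X], p ≠ 0 ∧ E ^ (m - k) * aeval (K : A) p ∈ TwoSidedIdeal.span {E ^ m} := by
  induction k with
  | zero =>
    exact ⟨1, one_ne_zero, by simpa using TwoSidedIdeal.subset_span (Set.mem_singleton (E ^ m))⟩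
  | succ k ih =>
    obtain ⟨p, hp0, hp⟩ := ih (by omega)
    obtain ⟨n, hn⟩ : ∃ n, m - k = n + 1 := ⟨m - k - 1, by omega⟩
    rw [show m - (k + 1) = n by omega]
    rw [hn] at hp
    have hc := hcomm (n + 1) (by omega) (by omega)
    have htn := ht (n + 1) (by omega) (by omega)
    rw [Nat.add_sub_cancel] at hc
    set T := t (n + 1)
    set S := s (n + 1)
    set p' := p.comp (C a * X) with hp'
    have hp'0 : p' ≠ 0 := by
      intro h0
      rcases comp_eq_zero_iff.mp h0 with h1 | ⟨-, h1⟩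
      · exact hp0 h1
      · have := congrArg (coeff · 1) h1
        simp [ha] at this
    have hquad : (C T * X ^ 2 - C S : ℂ[X]) ≠ 0 := by
      intro h0
      have := congrArg (coeff · 2) h0
      simp [htn] at this
    refine ⟨(C T * X ^ 2 - C S) * (p' * p), mul_ne_zero hquad (mul_ne_zero hp'0 hp0), ?_⟩
    have hswap := aeval_mul_eq_mul_aeval_comp a F (K : A) h p
    rw [← hp'] at hswap
    have hfac : aeval (K : A) (C T * X ^ 2 - C S)
        = (T • (K : A) - S • ((K⁻¹ : Aˣ) : A)) * (K : A) := by
      simp [sub_mul, pow_two, Algebra.algebraMap_eq_smul_one]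
    have key : E ^ (n + 1) * aeval (K : A) p * (F * aeval (K : A) (p * X))
          - F * (E ^ (n + 1) * aeval (K : A) p) * aeval (K : A) (p' * X)
        = E ^ n * aeval (K : A) ((C T * X ^ 2 - C S) * (p' * p)) := by
      calc _ = E ^ (n + 1) * (aeval (K : A) p * F) * aeval (K : A) (p * X)
            - F * E ^ (n + 1) * (aeval (K : A) (p * (p' * X))) := by
              rw [map_mul _ p (p' * X)]; simp only [mul_assoc]
        _ = (E ^ (n + 1) * F - F * E ^ (n + 1)) * aeval (K : A) (X * (p' * p)) := by
              rw [hswap, show p * (p' * X) = X * (p' * p) by ring,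
                show X * (p' * p) = p' * (p * X) by ring, map_mul _ p' (p * X)]
              simp only [mul_assoc, sub_mul]
        _ = _ := by
              rw [hc, map_mul _ (C T * X ^ 2 - C S), hfac, map_mul _ X, aeval_X]
              simp only [mul_assoc]
    rw [← key]
    exact TwoSidedIdeal.sub_mem _ (TwoSidedIdeal.mul_mem_right _ _ _ hp)
      (TwoSidedIdeal.mul_mem_right _ _ _ (TwoSidedIdeal.mul_mem_left _ _ _ hp))

/-- If `q` is not a root of unity and `[Eⁿ,F] = E^{n−1}(tₙK − sₙK⁻¹)` with `tₙ, sₙ ≠ 0`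
for `n = 1, …, m`, then some non-trivial Laurent polynomial in `K` belongs to the
two-sided ideal generated by `E^m`. -/
theorem stmt_2 (q : ℂ) (hq0 : q ≠ 0) (hq : ∀ n : ℕ, 1 ≤ n → q ^ n ≠ 1)
    {A : Type*} [Ring A] [Algebra ℂ A]
    (E F : A) (K : Aˣ)
    (hKE : (K : A) * E * ((K⁻¹ : Aˣ) : A) = q ^ 2 • E)
    (hKF : (K : A) * F * ((K⁻¹ : Aˣ) : A) = (q⁻¹) ^ 2 • F)
    (hEF : E * F - F * E = (q - q⁻¹)⁻¹ • ((K : A) - ((K⁻¹ : Aˣ) : A)))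
    (m : ℕ) (hm : 1 ≤ m)
    (t s : ℕ → ℂ)
    (ht : ∀ n, 1 ≤ n → n ≤ m → t n ≠ 0)
    (hs : ∀ n, 1 ≤ n → n ≤ m → s n ≠ 0)
    (hcomm : ∀ n, 1 ≤ n → n ≤ m →
      E ^ n * F - F * E ^ n = E ^ (n - 1) * (t n • (K : A) - s n • ((K⁻¹ : Aˣ) : A))) :
    ∃ c : ℤ →₀ ℂ, c ≠ 0 ∧
      (c.sum fun j a => a • ((K ^ j : Aˣ) : A)) ∈ TwoSidedIdeal.span {E ^ m} := by
  have hKF' : (K : A) * F = (q⁻¹) ^ 2 • (F * (K : A)) := by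
    rw [← smul_mul_assoc, ← hKF, mul_assoc _ _ (K : A), Units.inv_mul, mul_one]
  obtain ⟨p, hp0, hp⟩ := exists_pow_mul_aeval_mem ((q⁻¹) ^ 2) (pow_ne_zero _ (inv_ne_zero hq0))
    E F K hKF' m t s ht hcomm m le_rfl
  let d : ℕ →₀ ℂ := Finsupp.onFinset p.support p.coeff fun n hn => mem_support_iff.mpr hn
  refine ⟨d.embDomain Nat.castEmbedding, ?_, ?_⟩
  · intro h0
    rw [Finsupp.embDomain_eq_zero] at h0
    exact hp0 (Polynomial.ext fun n => DFunLike.congr_fun h0 n)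
  · rw [Finsupp.sum_embDomain, Finsupp.onFinset_sum _ (by simp)]
    rw [Nat.sub_self, pow_zero, one_mul, aeval_def, eval₂_eq_sum, Polynomial.sum] at hp
    simpa [Algebra.smul_def] using hp
end

section
/- Let q ∈ ℂ be nonzero and not a root of unity. Let A be a unital associative ℂ-algebra generated as a ℂ-algebra by elements E, F, K, K⁻¹, where K is invertible and E, F, K satisfy the quantum sl₂ relations. If E and F are nilpotent, then A is finite dimensional as a ℂ-vector space. -/
/-!
The algebra `A` is spanned by the products `F ^ i * K ^ j * E ^ k` (triangular decomposition), so,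
`E` and `F` being nilpotent, it is enough to show that `K` is algebraic over `ℂ`.

For this, start from the commutation rule
`E * F ^ (n + 1) = F ^ (n + 1) * E + F ^ n * (a * K - b * K⁻¹)` (`QSl2.E_mul_F_pow`), where `a ≠ 0`
because `q` is not a root of unity. If `E * y = 0` and `F ^ n * y = 0`, the rule lowers `n` at the
cost of multiplying `y` by a nonzero polynomial in `K`; hence some nonzero polynomial in `K` kills
`y` (`QSl2.exists_poly_of_ker`). Applied to `y = E ^ k * f(K)`, this converts
`E ^ (k + 1) * f(K) = 0` into `E ^ k * g(K) = 0` with `g ≠ 0`, since polynomials in `K` move past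
powers of `E` after rescaling the variable. Descending from `E ^ r = 0` to exponent `0` produces a
nonzero polynomial that vanishes at `K` (`QSl2.isIntegral_K`).
-/

open Polynomial

namespace QSl2

variable {A : Type*} [Ring A] [Algebra ℂ A]

/-- If `x` commutes with `k` up to the nonzero scalar `c`, then polynomials in `k` move from the
right of `x` to its left after rescaling the variable by `c`. -/
lemma exists_mul_aeval {x k : A} {c : ℂ} (hc : c ≠ 0) (h : x * k = c • (k * x)) (p : ℂ[X]) :
    ∃ p' : ℂ[X], (p ≠ 0 → p' ≠ 0) ∧ x * aeval k p = aeval k p' * x := by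
  refine ⟨p.comp (C c * X), fun hp h0 => hp ?_, ?_⟩
  · have : (p.comp (C c * X)).comp (C c⁻¹ * X) = p := by
      rw [comp_assoc]
      simp [← mul_assoc, ← C_mul, hc]
    rw [← this, h0, zero_comp]
  · rw [aeval_comp]
    have h' : x * k = (aeval k (C c * X)) * x := by
      simp [h, ← Algebra.smul_def]
    generalize aeval k (C c * X) = w at h'
    induction p using Polynomial.induction_on' with
    | add p r hp hr => simp [mul_add, add_mul, hp, hr]
    | monomial n a =>
      have := (SemiconjBy.pow_right (show SemiconjBy x k w from h') n).eq
      simp only [aeval_monomial, ← Algebra.smul_def, mul_smul_comm, smul_mul_assoc, this]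

/-- The converse move of `exists_mul_aeval`, from the left to the right, for powers of `x`. -/
lemma exists_aeval_mul_pow {x k : A} {c : ℂ} (hc : c ≠ 0) (h : x * k = c • (k * x)) (n : ℕ)
    (p : ℂ[X]) :
    ∃ p' : ℂ[X], (p ≠ 0 → p' ≠ 0) ∧ aeval k p * x ^ n = x ^ n * aeval k p' := by
  induction n with
  | zero => exact ⟨p, id, by simp⟩
  | succ n ih =>
    obtain ⟨p', hp', e⟩ := ih
    -- one more factor `x` is passed by `exists_mul_aeval` in the opposite algebra, with scalar `c⁻¹`
    have hop : MulOpposite.op x * MulOpposite.op k =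
        c⁻¹ • (MulOpposite.op k * MulOpposite.op x) := by
      rw [← MulOpposite.op_mul, ← MulOpposite.op_mul, h, ← MulOpposite.op_smul, smul_smul,
        inv_mul_cancel₀ hc, one_smul]
    obtain ⟨p'', hp'', e'⟩ := exists_mul_aeval (inv_ne_zero hc) hop p'
    have hae : ∀ r : ℂ[X], aeval (MulOpposite.op k) r = MulOpposite.op (aeval k r) := by
      intro r
      induction r using Polynomial.induction_on' with
      | add r s hr hs => simp [hr, hs]
      | monomial n a =>
        simp only [aeval_monomial, ← Algebra.smul_def, MulOpposite.op_smul, MulOpposite.op_pow]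
    rw [hae, hae, ← MulOpposite.op_mul, ← MulOpposite.op_mul, MulOpposite.op_inj] at e'
    exact ⟨p'', fun hp => hp'' (hp' hp), by
      rw [pow_succ, ← mul_assoc, e, mul_assoc, e', mul_assoc]⟩

/-- The commutation rule between `E` and powers of `F`. Here `t` stands for `q⁻²` and `c` for
`(q - q⁻¹)⁻¹`. -/
lemma E_mul_F_pow {E F k k' : A} {c t : ℂ}
    (hkF : k * F = t • (F * k)) (hk'F : k' * F = t⁻¹ • (F * k'))
    (hEF : E * F - F * E = c • (k - k')) (n : ℕ) :
    E * F ^ (n + 1) = F ^ (n + 1) * E + F ^ n *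
      ((c * ∑ i ∈ Finset.range (n + 1), t ^ i) • k
        - (c * ∑ i ∈ Finset.range (n + 1), t⁻¹ ^ i) • k') := by
  have hEF' : E * F = F * E + c • (k - k') := by rw [← hEF]; abel
  induction n with
  | zero => simp [hEF', smul_sub]
  | succ n ih =>
    rw [pow_succ F (n + 1), ← mul_assoc, ih, geom_sum_succ (n := n + 1), geom_sum_succ (n := n + 1),
      add_mul, mul_assoc _ E F, hEF', mul_assoc _ _ F, sub_mul, smul_mul_assoc, smul_mul_assoc,
      hkF, hk'F, pow_succ F n]
    generalize ∑ i ∈ Finset.range (n + 1), t ^ i = a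
    generalize ∑ i ∈ Finset.range (n + 1), t⁻¹ ^ i = b
    simp only [mul_add, mul_sub, mul_smul_comm, smul_sub, smul_smul, mul_assoc, mul_one]
    module

/-- An element `y` killed (under left multiplication) by `E` and by a power of `F` is
killed by a nonzero polynomial in `K`. -/
lemma exists_poly_of_ker {E F k k' : A} {c t : ℂ} (hc : c ≠ 0) (ht0 : t ≠ 0)
    (ht : ∀ n : ℕ, 1 ≤ n → t ^ n ≠ 1) (hk'k : k' * k = 1)
    (hEk : E * k = t • (k * E)) (hFk : F * k = t⁻¹ • (k * F))
    (hkF : k * F = t • (F * k)) (hk'F : k' * F = t⁻¹ • (F * k'))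
    (hEF : E * F - F * E = c • (k - k')) (n : ℕ) :
    ∀ y : A, E * y = 0 → F ^ n * y = 0 → ∃ P : ℂ[X], P ≠ 0 ∧ aeval k P * y = 0 := by
  induction n with
  | zero => exact fun y _ hy => ⟨1, one_ne_zero, by simpa using hy⟩
  | succ n ih =>
    intro y hEy hFy
    have hrule := E_mul_F_pow hkF hk'F hEF n
    have ha : c * ∑ i ∈ Finset.range (n + 1), t ^ i ≠ 0 := by
      refine mul_ne_zero hc fun h0 => ht (n + 1) (by omega) ?_
      have := mul_geom_sum t (n + 1)
      rw [h0, mul_zero] at this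
      exact (sub_eq_zero.mp this.symm)
    generalize c * ∑ i ∈ Finset.range (n + 1), t ^ i = a at hrule ha
    generalize c * ∑ i ∈ Finset.range (n + 1), t⁻¹ ^ i = b at hrule
    -- the rule is applied to `k * y`, which turns `a * k - b * k'` into the polynomial
    -- `a * X ^ 2 - b` in `k`
    set G : ℂ[X] := C a * X ^ 2 - C b with hG
    have hG0 : G ≠ 0 := by
      intro h0
      have := congrArg (fun p => coeff p 2) h0
      simp [hG] at this
      exact ha this
    have hGk : aeval k G = (a • k - b • k') * k := by
      simp [hG, sub_mul, hk'k, pow_two, Algebra.smul_def, mul_assoc]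
    have hEky : E * (k * y) = 0 := by
      rw [← mul_assoc, hEk, smul_mul_assoc, mul_assoc, hEy, mul_zero, smul_zero]
    have hFky : F ^ (n + 1) * (k * y) = 0 := by
      have hcomm : ∀ m : ℕ, F ^ m * k = t⁻¹ ^ m • (k * F ^ m) := by
        intro m
        induction m with
        | zero => simp
        | succ m ihm =>
          rw [pow_succ, mul_assoc, hFk, mul_smul_comm, ← mul_assoc, ihm, smul_mul_assoc,
            smul_smul, mul_assoc, pow_succ t⁻¹, mul_comm (t⁻¹)]
      rw [← mul_assoc, hcomm, smul_mul_assoc, mul_assoc, hFy, mul_zero, smul_zero]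
    obtain ⟨G', -, hG'⟩ := exists_mul_aeval ht0 hEk G
    have h1 : E * (aeval k G * y) = 0 := by
      rw [← mul_assoc, hG', mul_assoc, hEy, mul_zero]
    have h2 : F ^ n * (aeval k G * y) = 0 := by
      have := congrArg (· * (k * y)) hrule
      simp only [add_mul, mul_assoc, hFky, hEky, mul_zero, zero_add] at this
      rw [hGk, mul_assoc]
      exact this.symm
    obtain ⟨P, hP, hPy⟩ := ih _ h1 h2
    exact ⟨P * G, mul_ne_zero hP hG0, by rw [map_mul, mul_assoc, hPy]⟩

lemma isIntegral_K {E F k k' : A} {c t : ℂ} (hc : c ≠ 0) (ht0 : t ≠ 0)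
    (ht : ∀ n : ℕ, 1 ≤ n → t ^ n ≠ 1) (hk'k : k' * k = 1)
    (hEk : E * k = t • (k * E)) (hFk : F * k = t⁻¹ • (k * F))
    (hkF : k * F = t • (F * k)) (hk'F : k' * F = t⁻¹ • (F * k'))
    (hEF : E * F - F * E = c • (k - k')) (hE : IsNilpotent E) (hF : IsNilpotent F) :
    IsIntegral ℂ k := by
  obtain ⟨r, hr⟩ := hE
  obtain ⟨s, hs⟩ := hF
  have key : ∀ m : ℕ, (∃ f : ℂ[X], f ≠ 0 ∧ E ^ m * aeval k f = 0) →
      ∃ f : ℂ[X], f ≠ 0 ∧ aeval k f = 0 := by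
    intro m
    induction m with
    | zero => simp
    | succ m ih =>
      rintro ⟨f, hf, h⟩
      apply ih
      obtain ⟨P, hP, hPy⟩ := exists_poly_of_ker hc ht0 ht hk'k hEk hFk hkF hk'F hEF s
        (E ^ m * aeval k f) (by rw [← mul_assoc, ← pow_succ', h]) (by rw [hs, zero_mul])
      obtain ⟨P', hP', e⟩ := exists_aeval_mul_pow ht0 hEk m P
      exact ⟨P' * f, mul_ne_zero (hP' hP) hf, by
        rw [map_mul, ← mul_assoc, ← e, mul_assoc, hPy]⟩
  obtain ⟨f, hf, h⟩ := key r ⟨1, one_ne_zero, by simp [hr]⟩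
  exact IsAlgebraic.isIntegral ⟨f, hf, h⟩

lemma isIntegral_of_isNilpotent {x : A} (hx : IsNilpotent x) : IsIntegral ℂ x := by
  obtain ⟨n, hn⟩ := hx
  exact ⟨X ^ n, monic_X_pow n, by simp [hn]⟩

/-- The inverse of an algebraic unit is a polynomial in it: multiplication by `k` is injective,
hence surjective, on the finite-dimensional algebra `ℂ[k]`. -/
lemma inv_mem_adjoin {k k' : A} (hk'k : k' * k = 1) (hk : IsIntegral ℂ k) :
    k' ∈ Algebra.adjoin ℂ {k} := by
  have : FiniteDimensional ℂ (Algebra.adjoin ℂ {k}) :=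
    Module.Finite.iff_fg.mpr hk.fg_adjoin_singleton
  let κ : Algebra.adjoin ℂ {k} := ⟨k, Algebra.self_mem_adjoin_singleton ℂ k⟩
  have hinj : Function.Injective (LinearMap.mulLeft ℂ κ) := by
    intro x y hxy
    have h : k * (x : A) = k * y := congrArg Subtype.val hxy
    have := congrArg (k' * ·) h
    simp only [← mul_assoc, hk'k, one_mul] at this
    exact Subtype.ext this
  obtain ⟨x, hx⟩ := LinearMap.injective_iff_surjective.mp hinj 1
  have hx' : k * (x : A) = 1 := congrArg Subtype.val hx
  have : k' = x := by rw [← mul_one k', ← hx', ← mul_assoc, hk'k, one_mul]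
  exact this ▸ x.2

/-- Triangular decomposition: `ℂ[F] * ℂ[K] * ℂ[E]` is all of `A`. -/
lemma triangular {E F k k' : A} {c t : ℂ} (ht0 : t ≠ 0)
    (hgen : Algebra.adjoin ℂ {E, F, k, k'} = ⊤)
    (hEk : E * k = t • (k * E))
    (hkF : k * F = t • (F * k)) (hk'F : k' * F = t⁻¹ • (F * k'))
    (hEF : E * F - F * E = c • (k - k')) (hk' : k' ∈ Algebra.adjoin ℂ {k}) :
    (Algebra.adjoin ℂ {F}).toSubmodule * (Algebra.adjoin ℂ {k}).toSubmodule *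
      (Algebra.adjoin ℂ {E}).toSubmodule = ⊤ := by
  set S := Algebra.adjoin ℂ {k} with hS
  set W := (Algebra.adjoin ℂ {F}).toSubmodule * S.toSubmodule *
      (Algebra.adjoin ℂ {E}).toSubmodule with hW
  have hkS : k ∈ S := Algebra.self_mem_adjoin_singleton ℂ k
  have hEE : E ∈ Algebra.adjoin ℂ {E} := Algebra.self_mem_adjoin_singleton ℂ E
  have hmem : ∀ (n : ℕ) (s e : A), s ∈ S → e ∈ Algebra.adjoin ℂ {E} → F ^ n * s * e ∈ W :=
    fun n s e hs he => Submodule.mul_mem_mul (Submodule.mul_mem_mul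
      (pow_mem (Algebra.self_mem_adjoin_singleton ℂ F) n) hs) he
  have hind : ∀ a : A, (∀ (n : ℕ) (s e : A), s ∈ S → e ∈ Algebra.adjoin ℂ {E} →
      a * (F ^ n * s * e) ∈ W) → ∀ w ∈ W, a * w ∈ W := by
    intro a h w hw
    induction hw using Submodule.mul_induction_on' with
    | add x _ y _ hx hy => rw [mul_add]; exact add_mem hx hy
    | mem_mul_mem x hx e he =>
      induction hx using Submodule.mul_induction_on' with
      | add x _ y _ hx hy => rw [add_mul, mul_add]; exact add_mem hx hy
      | mem_mul_mem f hf s hs =>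
        rw [Subalgebra.mem_toSubmodule, Algebra.adjoin_singleton_eq_range_aeval] at hf
        obtain ⟨p, rfl⟩ := hf
        change a * (aeval F p * s * e) ∈ W
        induction p using Polynomial.induction_on' with
        | add p r hp hr => simpa only [map_add, add_mul, mul_add] using add_mem hp hr
        | monomial n z =>
          simp only [aeval_monomial, ← Algebra.smul_def, smul_mul_assoc, mul_smul_comm]
          exact W.smul_mem z (h n s e hs he)
  have hpow : ∀ (u : A) (d : ℂ), u * F = d • (F * u) → ∀ n : ℕ,
      u * F ^ n = d ^ n • (F ^ n * u) := by
    intro u d h n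
    induction n with
    | zero => simp
    | succ n ih =>
      rw [pow_succ, ← mul_assoc, ih, smul_mul_assoc, mul_assoc, h, mul_smul_comm, smul_smul,
        pow_succ, mul_assoc]
  -- an element of `ℂ[k]` that commutes with `F` up to a scalar preserves `W`
  have hdiag : ∀ (u : A) (d : ℂ), u ∈ S → u * F = d • (F * u) → ∀ w ∈ W, u * w ∈ W := by
    intro u d hu h
    refine hind u fun n s e hs he => ?_
    rw [← mul_assoc, ← mul_assoc, hpow u d h, smul_mul_assoc, smul_mul_assoc, mul_assoc _ u s]
    exact W.smul_mem _ (hmem n _ e (mul_mem hu hs) he)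
  have hEs : ∀ (n : ℕ) (s e : A), s ∈ S → e ∈ Algebra.adjoin ℂ {E} →
      F ^ n * E * s * e ∈ W := by
    intro n s e hs he
    rw [hS, Algebra.adjoin_singleton_eq_range_aeval] at hs
    obtain ⟨p, rfl⟩ := hs
    obtain ⟨p', -, e'⟩ := exists_mul_aeval ht0 hEk p
    change F ^ n * E * aeval k p * e ∈ W
    rw [mul_assoc _ E, e', ← mul_assoc, mul_assoc _ E]
    exact hmem n _ _ (aeval_mem_adjoin_singleton ℂ k) (mul_mem hEE he)
  have hact : ∀ a : A, ∀ w ∈ W, a * w ∈ W := by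
    intro a
    have ha : a ∈ Algebra.adjoin ℂ {E, F, k, k'} := hgen ▸ Algebra.mem_top
    induction ha using Algebra.adjoin_induction with
    | algebraMap z => intro w hw; rw [← Algebra.smul_def]; exact W.smul_mem z hw
    | add x y _ _ hx hy => intro w hw; rw [add_mul]; exact add_mem (hx w hw) (hy w hw)
    | mul x y _ _ hx hy => intro w hw; rw [mul_assoc]; exact hx _ (hy w hw)
    | mem x hx =>
      rcases hx with rfl | rfl | rfl | rfl
      · refine hind _ fun n s e hs he => ?_
        cases n with
        | zero => simpa [mul_assoc] using hEs 0 s e hs he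
        | succ n =>
          rw [← mul_assoc, ← mul_assoc, E_mul_F_pow hkF hk'F hEF n, add_mul, add_mul]
          refine add_mem (hEs _ s e hs he) ?_
          rw [mul_assoc (F ^ n)]
          exact hmem n _ e (mul_mem (sub_mem (S.smul_mem hkS _) (S.smul_mem hk' _)) hs) he
      · refine hind _ fun n s e hs he => ?_
        rw [← mul_assoc, ← mul_assoc, ← pow_succ']
        exact hmem _ s e hs he
      · exact hdiag _ t hkS hkF
      · exact hdiag _ t⁻¹ hk' hk'F
  rw [eq_top_iff]
  intro a _
  have h1 : (1 : A) ∈ W := by simpa using hmem 0 1 1 (one_mem _) (one_mem _)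
  simpa using hact a 1 h1

end QSl2

/-- If `q` is not a root of unity and a unital ℂ-algebra `A` is generated by
`E, F, K, K⁻¹` satisfying the quantum sl₂ relations, with `E` and `F` nilpotent,
then `A` is finite dimensional. -/
theorem stmt_3 (q : ℂ) (hq0 : q ≠ 0) (hq : ∀ n : ℕ, 1 ≤ n → q ^ n ≠ 1)
    {A : Type*} [Ring A] [Algebra ℂ A]
    (E F : A) (K : Aˣ)
    (hgen : Algebra.adjoin ℂ {E, F, (K : A), ((K⁻¹ : Aˣ) : A)} = ⊤)
    (hKE : (K : A) * E * ((K⁻¹ : Aˣ) : A) = q ^ 2 • E)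
    (hKF : (K : A) * F * ((K⁻¹ : Aˣ) : A) = (q⁻¹) ^ 2 • F)
    (hEF : E * F - F * E = (q - q⁻¹)⁻¹ • ((K : A) - ((K⁻¹ : Aˣ) : A)))
    (hEnil : IsNilpotent E) (hFnil : IsNilpotent F) :
    FiniteDimensional ℂ A := by
  set k : A := (K : A) with hk
  set k' : A := ((K⁻¹ : Aˣ) : A) with hk'
  have hk'k : k' * k = 1 := K.inv_mul
  have ht0 : (q⁻¹) ^ 2 ≠ 0 := pow_ne_zero 2 (inv_ne_zero hq0)
  have ht : ∀ n : ℕ, 1 ≤ n → ((q⁻¹) ^ 2) ^ n ≠ 1 := by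
    intro n hn h
    rw [← pow_mul, inv_pow, inv_eq_one] at h
    exact hq (2 * n) (by omega) h
  have hc : (q - q⁻¹)⁻¹ ≠ 0 := by
    refine inv_ne_zero fun h => hq 2 (by norm_num) ?_
    rw [pow_two]
    nth_rewrite 2 [sub_eq_zero.mp h]
    exact mul_inv_cancel₀ hq0
  -- the conjugation relations, rewritten without inverses of `K`
  have hkE : k * E = q ^ 2 • (E * k) := by
    have := congrArg (· * k) hKE
    simpa only [mul_assoc, hk'k, mul_one, smul_mul_assoc] using this
  have hkF : k * F = (q⁻¹) ^ 2 • (F * k) := by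
    have := congrArg (· * k) hKF
    simpa only [mul_assoc, hk'k, mul_one, smul_mul_assoc] using this
  have hEk : E * k = (q⁻¹) ^ 2 • (k * E) := by
    rw [hkE, smul_smul, inv_pow, inv_mul_cancel₀ (pow_ne_zero 2 hq0), one_smul]
  have hFk : F * k = ((q⁻¹) ^ 2)⁻¹ • (k * F) := by
    rw [hkF, smul_smul, inv_mul_cancel₀ ht0, one_smul]
  have hk'F : k' * F = ((q⁻¹) ^ 2)⁻¹ • (F * k') := by
    have h := congrArg (k' * ·) hKF
    simp only [← mul_assoc, hk'k, one_mul, mul_smul_comm] at h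
    rw [h, smul_smul, inv_mul_cancel₀ ht0, one_smul]
  have hint := QSl2.isIntegral_K hc ht0 ht hk'k hEk hFk hkF hk'F hEF hEnil hFnil
  have htop := QSl2.triangular ht0 hgen hEk hkF hk'F hEF (QSl2.inv_mem_adjoin hk'k hint)
  refine ⟨?_⟩
  rw [← htop]
  exact ((QSl2.isIntegral_of_isNilpotent hFnil).fg_adjoin_singleton.mul
    hint.fg_adjoin_singleton).mul (QSl2.isIntegral_of_isNilpotent hEnil).fg_adjoin_singleton
end

section
/- Let B be a unital complex Banach algebra, let h, e ∈ B, and let α ∈ ℂ with α ≠ 0. If h·e − e·h = α·e, then e is nilpotent, i.e. there exists n ∈ ℕ with eⁿ = 0. -/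
/-!
The map `x ↦ h * x - x * h` is a derivation, so it sends `e ^ n` to `(n * α) • e ^ n`
(`commutator_pow`). It is also bounded, with norm at most `2 * ‖h‖`, so `e ^ n` must vanish as
soon as `n * ‖α‖ > 2 * ‖h‖`.
-/

/-- The derivation `x ↦ h * x - x * h` has `e ^ n` as an eigenvector with eigenvalue `n * α`. -/
lemma commutator_pow {B : Type*} [NormedRing B] [NormedAlgebra ℂ B]
    (h e : B) (α : ℂ) (hcomm : h * e - e * h = α • e) (n : ℕ) :
    h * e ^ n - e ^ n * h = ((n : ℂ) * α) • e ^ n := by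
  induction n with
  | zero => simp
  | succ n ih =>
    have key : h * e ^ (n + 1) - e ^ (n + 1) * h
        = (h * e ^ n - e ^ n * h) * e + e ^ n * (h * e - e * h) := by
      rw [pow_succ]; noncomm_ring
    rw [key, ih, hcomm, smul_mul_assoc, mul_smul_comm, ← pow_succ, ← add_smul]
    push_cast
    ring_nf

/-- If `h·e − e·h = α·e` in a unital complex Banach algebra with `α ≠ 0`,
then `e` is nilpotent. -/
theorem stmt_6 {B : Type*} [NormedRing B] [NormedAlgebra ℂ B] [CompleteSpace B]
    (h e : B) (α : ℂ) (hα : α ≠ 0)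
    (hcomm : h * e - e * h = α • e) :
    ∃ n : ℕ, e ^ n = 0 := by
  have hα' : 0 < ‖α‖ := norm_pos_iff.mpr hα
  -- The commutator with `h` has operator norm at most `2 * ‖h‖`, so `n * α` cannot be an
  -- eigenvalue once `n * ‖α‖` exceeds this bound.
  obtain ⟨n, hn⟩ := exists_nat_gt (2 * ‖h‖ / ‖α‖)
  rw [div_lt_iff₀ hα'] at hn
  refine ⟨n, ?_⟩
  by_contra hne
  have hpos : 0 < ‖e ^ n‖ := norm_pos_iff.mpr hne
  have hle : (n * ‖α‖) * ‖e ^ n‖ ≤ (2 * ‖h‖) * ‖e ^ n‖ := by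
    calc (n * ‖α‖) * ‖e ^ n‖ = ‖h * e ^ n - e ^ n * h‖ := by
          rw [commutator_pow h e α hcomm n, norm_smul, norm_mul, Complex.norm_natCast]
      _ ≤ ‖h * e ^ n‖ + ‖e ^ n * h‖ := norm_sub_le _ _
      _ ≤ ‖h‖ * ‖e ^ n‖ + ‖e ^ n‖ * ‖h‖ := add_le_add (norm_mul_le _ _) (norm_mul_le _ _)
      _ = (2 * ‖h‖) * ‖e ^ n‖ := by ring
  exact absurd (le_of_mul_le_mul_right hle hpos) (not_le.mpr hn)
end

section
/- Let A be a unital associative ℂ-algebra generated as a ℂ-algebra by elements e, f, h satisfying h·e − e·h = α·e and h·f − f·h = β·f for some α, β ∈ ℂ, and e·f − f·e = p(h) for some polynomial p ∈ ℂ[X]. Then the ℂ-linear span of the set of elements {e^j · h^k · f^n : j, k, n ∈ ℕ} is all of A. -/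
/-!
Let `S` be the span of the monomials `eʲ hᵏ fⁿ`. Since `1 ∈ S`, it suffices that the subalgebra of
elements `a` with `a S ⊆ S` (`leftStabilizer`) contains the generators `e`, `h`, `f`, for then it is
all of `A`. Stability under `e` is immediate. Stability under `h` follows by induction on `j` from
`h e = e h + α e`; hence `S` is also stable under `p(h)`. Stability under `f` follows by induction
on `j` from `f e = e f - p(h)`, where the case `j = 0` is an induction on `k` using
`f h = h f - β f`.
-/

/-- The subalgebra of all `a` whose left multiplication maps the subspace `S` into itself. -/
def leftStabilizer {A : Type*} [Ring A] [Algebra ℂ A] (S : Submodule ℂ A) : Subalgebra ℂ A where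
  carrier := {a | ∀ x ∈ S, a * x ∈ S}
  mul_mem' {a b} ha hb x hx := by
    rw [mul_assoc]
    exact ha _ (hb _ hx)
  add_mem' {a b} ha hb x hx := by
    rw [add_mul]
    exact S.add_mem (ha _ hx) (hb _ hx)
  algebraMap_mem' r x hx := by
    rw [← Algebra.smul_def]
    exact S.smul_mem _ hx

/-- Membership in the left stabilizer of a span can be tested on the spanning set. -/
lemma mem_leftStabilizer_span {A : Type*} [Ring A] [Algebra ℂ A] {s : Set A} {a : A}
    (ha : ∀ x ∈ s, a * x ∈ Submodule.span ℂ s) :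
    a ∈ leftStabilizer (Submodule.span ℂ s) := by
  intro x hx
  have hle : Submodule.span ℂ s ≤ (Submodule.span ℂ s).comap (LinearMap.mulLeft ℂ a) :=
    Submodule.span_le.2 ha
  exact hle hx

/-- If a unital ℂ-algebra is generated by `e, f, h` with `[h,e] = αe`, `[h,f] = βf`
and `[e,f] = p(h)` for a polynomial `p`, then the linear span of
`{eʲ hᵏ fⁿ}` is the whole algebra. -/
theorem stmt_9 {A : Type*} [Ring A] [Algebra ℂ A]
    (e f h : A) (α β : ℂ) (p : Polynomial ℂ)
    (hgen : Algebra.adjoin ℂ {e, f, h} = ⊤)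
    (h1 : h * e - e * h = α • e)
    (h2 : h * f - f * h = β • f)
    (h3 : e * f - f * e = Polynomial.aeval h p) :
    Submodule.span ℂ {x : A | ∃ j k n : ℕ, x = e ^ j * h ^ k * f ^ n} = ⊤ := by
  set s : Set A := {x : A | ∃ j k n : ℕ, x = e ^ j * h ^ k * f ^ n}
  set S := Submodule.span ℂ s
  have hmon (j k n : ℕ) : e ^ j * h ^ k * f ^ n ∈ S := Submodule.subset_span ⟨j, k, n, rfl⟩
  have he : e ∈ leftStabilizer S := by
    refine mem_leftStabilizer_span ?_
    rintro _ ⟨j, k, n, rfl⟩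
    have := hmon (j + 1) k n
    rwa [pow_succ', mul_assoc, mul_assoc, ← mul_assoc (e ^ j)] at this
  have hh : h ∈ leftStabilizer S := by
    refine mem_leftStabilizer_span ?_
    rintro _ ⟨j, k, n, rfl⟩
    induction j with
    | zero =>
      have := hmon 0 (k + 1) n
      rwa [pow_succ', pow_zero, one_mul, mul_assoc, ← one_mul (h ^ k), ← pow_zero e] at this
    | succ j ih =>
      have key : h * (e ^ (j + 1) * h ^ k * f ^ n)
          = e * (h * (e ^ j * h ^ k * f ^ n)) + α • (e ^ (j + 1) * h ^ k * f ^ n) := by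
        have hc : h * e = e * h + α • e := by rw [← h1]; abel
        calc h * (e ^ (j + 1) * h ^ k * f ^ n) = (h * e) * (e ^ j * h ^ k * f ^ n) := by
              simp only [pow_succ', mul_assoc]
          _ = _ := by rw [hc, add_mul]; simp only [pow_succ', mul_assoc, smul_mul_assoc]
      rw [key]
      exact S.add_mem (he _ ih) (S.smul_mem _ (hmon _ _ _))
  have hp : Polynomial.aeval h p ∈ leftStabilizer S :=
    Algebra.adjoin_le (Set.singleton_subset_iff.2 hh) (Polynomial.aeval_mem_adjoin_singleton ℂ h)
  have hf : f ∈ leftStabilizer S := by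
    refine mem_leftStabilizer_span ?_
    rintro _ ⟨j, k, n, rfl⟩
    induction j with
    | zero =>
      induction k with
      | zero => simpa [pow_succ'] using hmon 0 0 (n + 1)
      | succ k ih =>
        have key : f * (e ^ 0 * h ^ (k + 1) * f ^ n)
            = h * (f * (e ^ 0 * h ^ k * f ^ n)) - β • (f * (e ^ 0 * h ^ k * f ^ n)) := by
          have hc : f * h = h * f - β • f := by rw [← h2]; abel
          calc f * (e ^ 0 * h ^ (k + 1) * f ^ n) = (f * h) * (e ^ 0 * h ^ k * f ^ n) := by
                simp only [pow_succ', pow_zero, one_mul, mul_assoc]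
            _ = _ := by rw [hc, sub_mul]; simp only [mul_assoc, smul_mul_assoc]
        rw [key]
        exact S.sub_mem (hh _ ih) (S.smul_mem _ ih)
    | succ j ih =>
      have key : f * (e ^ (j + 1) * h ^ k * f ^ n)
          = e * (f * (e ^ j * h ^ k * f ^ n))
            - Polynomial.aeval h p * (e ^ j * h ^ k * f ^ n) := by
        have hc : f * e = e * f - Polynomial.aeval h p := by rw [← h3]; abel
        calc f * (e ^ (j + 1) * h ^ k * f ^ n) = (f * e) * (e ^ j * h ^ k * f ^ n) := by
              simp only [pow_succ', mul_assoc]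
          _ = _ := by rw [hc, sub_mul]; simp only [mul_assoc]
      rw [key]
      exact S.sub_mem (he _ ih) (hp _ (hmon _ _ _))
  have htop : (⊤ : Subalgebra ℂ A) ≤ leftStabilizer S := by
    rw [← hgen]
    refine Algebra.adjoin_le ?_
    rintro _ (rfl | rfl | rfl)
    exacts [he, hf, hh]
  refine eq_top_iff.2 fun a _ => ?_
  have hone : (1 : A) ∈ S := by simpa using hmon 0 0 0
  simpa using htop (Algebra.mem_top (x := a)) 1 hone
end

section
/- Let ℏ ∈ ℂ with sinh ℏ ≠ 0 and suppose q := e^ℏ is not a root of unity. Let n ∈ ℕ, k ∈ ℤ, ε ∈ {1, −1}. Then the only linear subspaces of ℂ^{n+1} invariant under the three matrices E_{n,ε}, F_{n,ε} and H_{n,k,ε} (acting by matrix-vector multiplication) are {0} and ℂ^{n+1}; that is, the representation T_{n,k,ε} is irreducible. -/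
/-!
The diagonal entries of `H` are pairwise distinct, so an `H`-invariant subspace contains, with any
vector `v`, each of its weight components (`single_mem_of_diagonal`). A nonzero invariant subspace
therefore contains some standard basis vector. As `q` is not a root of unity, the quantum integers
`[m]_q`, `m ≥ 1`, do not vanish (`qint_ne_zero`), so `E` and `F` move between neighbouring basis
vectors up to nonzero scalars: lowering the index with `E` gives `e₀`, and raising it with `F`
then gives every `eᵢ`.
-/

/-- A subspace invariant under a diagonal operator with distinct entries `d` contains the standard
basis vector of every coordinate in which some member is nonzero: applying `∏ (D - d j)` over all
`j ≠ i` isolates the `i`-th coordinate. -/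
lemma single_mem_of_diagonal {ι : Type*} [Fintype ι] [DecidableEq ι] (d : ι → ℂ)
    (hd : Function.Injective d) (S : Submodule ℂ (ι → ℂ))
    (hS : ∀ v ∈ S, (fun i => d i * v i) ∈ S) (v : ι → ℂ) (hv : v ∈ S) (i : ι) (hi : v i ≠ 0) :
    Pi.single i (1 : ℂ) ∈ S := by
  have key : ∀ s : Finset ι, (fun i => (∏ j ∈ s, (d i - d j)) * v i) ∈ S := by
    intro s
    induction s using Finset.induction_on with
    | empty => simpa using hv
    | insert a s ha ih =>
      have h := S.sub_mem (hS _ ih) (S.smul_mem (d a) ih)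
      convert h using 1
      funext x
      simp only [Finset.prod_insert ha, Pi.sub_apply, Pi.smul_apply, smul_eq_mul]
      ring
  have hne : (∏ j ∈ Finset.univ.erase i, (d i - d j)) * v i ≠ 0 := by
    refine mul_ne_zero (Finset.prod_ne_zero_iff.2 fun j hj => ?_) hi
    exact sub_ne_zero.2 fun h => Finset.ne_of_mem_erase hj (hd h).symm
  have h := S.smul_mem ((∏ j ∈ Finset.univ.erase i, (d i - d j)) * v i)⁻¹
    (key (Finset.univ.erase i))
  convert h using 1
  funext x
  by_cases hx : x = i
  · subst hx
    simp only [Pi.single_eq_same, Pi.smul_apply, smul_eq_mul]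
    exact (inv_mul_cancel₀ hne).symm
  · have h0 : ∏ j ∈ Finset.univ.erase i, (d x - d j) = 0 :=
      Finset.prod_eq_zero (Finset.mem_erase.2 ⟨hx, Finset.mem_univ x⟩) (sub_self _)
    simp [Pi.single_eq_of_ne hx, h0]

lemma qint_ne_zero {q : ℂ} (hq0 : q ≠ 0) (hqroot : ∀ m : ℕ, 1 ≤ m → q ^ m ≠ 1)
    (m : ℕ) (hm : 1 ≤ m) : (q ^ m - q⁻¹ ^ m) / (q - q⁻¹) ≠ 0 := by
  have aux : ∀ m : ℕ, 1 ≤ m → q ^ m - q⁻¹ ^ m ≠ 0 := by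
    intro m hm h
    apply hqroot (m + m) (by omega)
    rw [pow_add]
    nth_rewrite 2 [sub_eq_zero.1 h]
    rw [← mul_pow, mul_inv_cancel₀ hq0, one_pow]
  exact div_ne_zero (aux m hm) (by simpa using aux 1 le_rfl)

/-- If `A` maps `eⱼ` to a nonzero multiple of `eᵢ`, then an `A`-invariant subspace containing
`eⱼ` contains `eᵢ`. -/
lemma single_mem_of_col {ι : Type*} [Fintype ι] [DecidableEq ι] (A : Matrix ι ι ℂ)
    (S : Submodule ℂ (ι → ℂ)) (hS : ∀ v ∈ S, A.mulVec v ∈ S) (i j : ι) (hne : A i j ≠ 0)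
    (hz : ∀ x, x ≠ i → A x j = 0) (hj : Pi.single j (1 : ℂ) ∈ S) : Pi.single i (1 : ℂ) ∈ S := by
  have h := S.smul_mem (A i j)⁻¹ (hS _ hj)
  convert h using 1
  funext x
  rw [Matrix.mulVec_single_one]
  by_cases hx : x = i
  · subst hx
    simp [Matrix.col_apply, hne]
  · simp [Matrix.col_apply, hx, hz x hx]

/-- If `q = e^ℏ` is not a root of unity, the representation `T_{n,k,ε}` of
`~U(sl₂)_ℏ` given by the matrices `E_{n,ε}`, `F_{n,ε}`, `H_{n,k,ε}` is irreducible: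
the only invariant subspaces of `ℂ^{n+1}` are `{0}` and `ℂ^{n+1}`. -/
theorem stmt_14 (ℏ : ℂ) (hℏ : Complex.sinh ℏ ≠ 0) (q : ℂ) (hq : q = Complex.exp ℏ)
    (hqroot : ∀ m : ℕ, 1 ≤ m → q ^ m ≠ 1)
    (n : ℕ) (k : ℤ) (ε : ℂ) (hε : ε = 1 ∨ ε = -1)
    (r : ℂ)
    (hr : (ε = 1 ∧ r = 2 * (k : ℂ) * (Real.pi : ℂ) * Complex.I / ℏ) ∨
          (ε = -1 ∧ r = (2 * (k : ℂ) + 1) * (Real.pi : ℂ) * Complex.I / ℏ))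
    (E F H : Matrix (Fin (n + 1)) (Fin (n + 1)) ℂ)
    (hE : ∀ i j : Fin (n + 1), E i j =
      if (j : ℕ) = (i : ℕ) + 1 then
        ε * ((q ^ (n - (i : ℕ)) - q⁻¹ ^ (n - (i : ℕ))) / (q - q⁻¹)) else 0)
    (hF : ∀ i j : Fin (n + 1), F i j =
      if (i : ℕ) = (j : ℕ) + 1 then
        (q ^ ((j : ℕ) + 1) - q⁻¹ ^ ((j : ℕ) + 1)) / (q - q⁻¹) else 0)
    (hH : ∀ i j : Fin (n + 1), H i j =
      if i = j then (n : ℂ) - 2 * (i : ℕ) + r else 0) :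
    ∀ S : Submodule ℂ (Fin (n + 1) → ℂ),
      (∀ v ∈ S, E.mulVec v ∈ S) → (∀ v ∈ S, F.mulVec v ∈ S) →
      (∀ v ∈ S, H.mulVec v ∈ S) → S = ⊥ ∨ S = ⊤ := by
  intro S hSE hSF hSH
  have hq0 : q ≠ 0 := hq ▸ Complex.exp_ne_zero ℏ
  have hε0 : ε ≠ 0 := by rcases hε with h | h <;> simp [h]
  rw [or_iff_not_imp_left]
  intro hbot
  obtain ⟨v, hv, hv0⟩ := S.ne_bot_iff.1 hbot
  obtain ⟨i, hi⟩ := Function.ne_iff.1 hv0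
  have hi1 : Pi.single i (1 : ℂ) ∈ S := by
    refine single_mem_of_diagonal (fun i : Fin (n + 1) => (n : ℂ) - 2 * (i : ℕ) + r) ?_ S ?_ v hv
      i hi
    · intro a b hab
      have h : ((a : ℕ) : ℂ) = ((b : ℕ) : ℂ) := by
        have hab' : (n : ℂ) - 2 * (a : ℕ) + r = (n : ℂ) - 2 * (b : ℕ) + r := hab
        linear_combination (-1 / 2 : ℂ) * hab'
      exact Fin.ext (Nat.cast_injective h)
    · intro w hw
      convert hSH w hw using 1
      funext x
      simp [Matrix.mulVec, dotProduct, hH]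
  have down : ∀ m (hm : m + 1 < n + 1), Pi.single (⟨m + 1, hm⟩ : Fin (n + 1)) (1 : ℂ) ∈ S →
      Pi.single (⟨m, by omega⟩ : Fin (n + 1)) (1 : ℂ) ∈ S := by
    intro m hm h
    refine single_mem_of_col E S hSE _ _ ?_ ?_ h
    · rw [hE, if_pos rfl]
      exact mul_ne_zero hε0
        (qint_ne_zero hq0 hqroot _ (Nat.sub_pos_of_lt (Nat.lt_of_succ_lt_succ hm)))
    · intro x hx
      rw [hE, if_neg]
      intro hx'
      exact hx (Fin.ext (by simpa using hx'.symm))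
  have up : ∀ m (hm : m + 1 < n + 1), Pi.single (⟨m, by omega⟩ : Fin (n + 1)) (1 : ℂ) ∈ S →
      Pi.single (⟨m + 1, hm⟩ : Fin (n + 1)) (1 : ℂ) ∈ S := by
    intro m hm h
    refine single_mem_of_col F S hSF _ _ ?_ ?_ h
    · rw [hF, if_pos rfl]
      exact qint_ne_zero hq0 hqroot _ (Nat.succ_pos _)
    · intro x hx
      rw [hF, if_neg]
      intro hx'
      exact hx (Fin.ext hx')
  have zero_mem : ∀ m (hm : m < n + 1), Pi.single (⟨m, hm⟩ : Fin (n + 1)) (1 : ℂ) ∈ S →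
      Pi.single (⟨0, by omega⟩ : Fin (n + 1)) (1 : ℂ) ∈ S := by
    intro m
    induction m with
    | zero => exact fun _ h => h
    | succ m ih => exact fun hm h => ih _ (down m hm h)
  have all_mem : ∀ m (hm : m < n + 1), Pi.single (⟨m, hm⟩ : Fin (n + 1)) (1 : ℂ) ∈ S := by
    intro m
    induction m with
    | zero => exact fun _ => zero_mem i i.2 hi1
    | succ m ih => exact fun hm => up m hm (ih (by omega))
  rw [eq_top_iff]
  intro w _
  rw [pi_eq_sum_univ' w]
  refine S.sum_mem fun j _ => S.smul_mem _ ?_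
  convert all_mem j j.2 using 1
end

section
/- Let ℏ ∈ ℂ with sinh ℏ ≠ 0 and suppose q := e^ℏ is not a root of unity. Let n ∈ ℕ, k, k′ ∈ ℤ, ε, ε′ ∈ {1, −1}. If there exists an invertible (n+1)×(n+1) complex matrix S with S·E_{n,ε}·S⁻¹ = E_{n,ε′}, S·F_{n,ε}·S⁻¹ = F_{n,ε′}, and S·H_{n,k,ε}·S⁻¹ = H_{n,k′,ε′}, then k = k′ and ε = ε′. -/
/-!
The trace of `H_{n,k,ε}` is a constant depending only on `n` plus `(n + 1) r`, and it is
invariant under conjugation. Hence equivalence of the representations forces `r = r'`. Multiplying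
by `ℏ / (π i)` gives an equality between integers of the form `2k` (for `ε = 1`) or `2k + 1` (for
`ε = -1`), so parity determines `ε` and then the value determines `k`.
-/

/-- Conjugate matrices have equal trace; for matrices with diagonals `d + r` and `d + r'` this
identifies the scalar shifts. -/
theorem shift_eq_of_conj {n : ℕ} (d : Fin (n + 1) → ℂ) (r r' : ℂ)
    (H H' S : Matrix (Fin (n + 1)) (Fin (n + 1)) ℂ)
    (hH : ∀ i, H i i = d i + r) (hH' : ∀ i, H' i i = d i + r')
    (hS : IsUnit S) (hSH : S * H * S⁻¹ = H') : r = r' := by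
  have hdet : IsUnit S.det := (Matrix.isUnit_iff_isUnit_det S).mp hS
  have htr : H.trace = H'.trace := by
    rw [← hSH, Matrix.trace_mul_comm, Matrix.nonsing_inv_mul_cancel_left _ _ hdet]
  simp only [Matrix.trace, Matrix.diag_apply, hH, hH', Finset.sum_add_distrib, Finset.sum_const,
    Finset.card_univ, Fintype.card_fin, nsmul_eq_mul, add_right_inj] at htr
  exact mul_left_cancel₀ (Nat.cast_ne_zero.mpr n.succ_ne_zero) htr

/-- If `q = e^ℏ` is not a root of unity and the representations `T_{n,k,ε}` and
`T_{n,k',ε'}` are equivalent (via conjugation by an invertible matrix `S`), then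
`k = k'` and `ε = ε'`. -/
theorem stmt_15 (ℏ : ℂ) (hℏ : Complex.sinh ℏ ≠ 0) (q : ℂ) (hq : q = Complex.exp ℏ)
    (hqroot : ∀ m : ℕ, 1 ≤ m → q ^ m ≠ 1)
    (n : ℕ) (k k' : ℤ) (ε ε' : ℂ)
    (hε : ε = 1 ∨ ε = -1) (hε' : ε' = 1 ∨ ε' = -1)
    (r r' : ℂ)
    (hr : (ε = 1 ∧ r = 2 * (k : ℂ) * (Real.pi : ℂ) * Complex.I / ℏ) ∨
          (ε = -1 ∧ r = (2 * (k : ℂ) + 1) * (Real.pi : ℂ) * Complex.I / ℏ))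
    (hr' : (ε' = 1 ∧ r' = 2 * (k' : ℂ) * (Real.pi : ℂ) * Complex.I / ℏ) ∨
           (ε' = -1 ∧ r' = (2 * (k' : ℂ) + 1) * (Real.pi : ℂ) * Complex.I / ℏ))
    (E E' F F' H H' : Matrix (Fin (n + 1)) (Fin (n + 1)) ℂ)
    (hE : ∀ i j : Fin (n + 1), E i j =
      if (j : ℕ) = (i : ℕ) + 1 then
        ε * ((q ^ (n - (i : ℕ)) - q⁻¹ ^ (n - (i : ℕ))) / (q - q⁻¹)) else 0)
    (hE' : ∀ i j : Fin (n + 1), E' i j =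
      if (j : ℕ) = (i : ℕ) + 1 then
        ε' * ((q ^ (n - (i : ℕ)) - q⁻¹ ^ (n - (i : ℕ))) / (q - q⁻¹)) else 0)
    (hF : ∀ i j : Fin (n + 1), F i j =
      if (i : ℕ) = (j : ℕ) + 1 then
        (q ^ ((j : ℕ) + 1) - q⁻¹ ^ ((j : ℕ) + 1)) / (q - q⁻¹) else 0)
    (hF' : ∀ i j : Fin (n + 1), F' i j =
      if (i : ℕ) = (j : ℕ) + 1 then
        (q ^ ((j : ℕ) + 1) - q⁻¹ ^ ((j : ℕ) + 1)) / (q - q⁻¹) else 0)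
    (hH : ∀ i j : Fin (n + 1), H i j =
      if i = j then (n : ℂ) - 2 * (i : ℕ) + r else 0)
    (hH' : ∀ i j : Fin (n + 1), H' i j =
      if i = j then (n : ℂ) - 2 * (i : ℕ) + r' else 0)
    (S : Matrix (Fin (n + 1)) (Fin (n + 1)) ℂ) (hS : IsUnit S)
    (hSE : S * E * S⁻¹ = E') (hSF : S * F * S⁻¹ = F') (hSH : S * H * S⁻¹ = H') :
    k = k' ∧ ε = ε' := by
  have hrr : r = r' := shift_eq_of_conj (fun i => (n : ℂ) - 2 * (i : ℕ)) r r' H H' S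
    (fun i => by simp [hH]) (fun i => by simp [hH']) hS hSH
  have hℏ0 : ℏ ≠ 0 := by
    rintro rfl
    simp at hℏ
  have hπ : (Real.pi : ℂ) ≠ 0 := Complex.ofReal_ne_zero.mpr Real.pi_ne_zero
  have cancel : ∀ a b : ℤ, (a : ℂ) * (Real.pi : ℂ) * Complex.I / ℏ =
      (b : ℂ) * (Real.pi : ℂ) * Complex.I / ℏ → a = b := by
    intro a b h
    rw [div_left_inj' hℏ0, mul_left_inj' Complex.I_ne_zero, mul_left_inj' hπ] at h
    exact_mod_cast h
  rcases hr with ⟨e, hr⟩ | ⟨e, hr⟩ <;> rcases hr' with ⟨e', hr'⟩ | ⟨e', hr'⟩ <;>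
    rw [hr, hr'] at hrr
  · have := cancel (2 * k) (2 * k') (by push_cast; exact hrr)
    exact ⟨by omega, e.trans e'.symm⟩
  · have := cancel (2 * k) (2 * k' + 1) (by push_cast; exact hrr)
    omega
  · have := cancel (2 * k + 1) (2 * k') (by push_cast; exact hrr)
    omega
  · have := cancel (2 * k + 1) (2 * k' + 1) (by push_cast; exact hrr)
    exact ⟨by omega, e.trans e'.symm⟩
end
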